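/- Let A be a linear endomorphism of a finite-dimensional vector space V over a field F whose minimal polynomial is p^r with p irreducible and separable. Then there exists a subspace of V that is characteristic for A but not hyperinvariant for A if and only if: F has exactly two elements, p has degree 1 (say p = x − λ, so that N = A − λ·id is nilpotent), and there exist positive integers r' and s with s > r' + 1 such that the Jordan form of N has exactly one block of size s and exactly one block of size r', i.e., 2·dim ker(N^s) − dim ker(N^{s−1}) − dim ker(N^{s+1}) = 1 and 2·dim ker(N^{r'}) − dim ker(N^{r'−1}) − dim ker(N^{r'+1}) = 1. -/

import Mathlib

/-- A subspace `Y` is hyperinvariant for `A` if `g Y ⊆ Y` for every endomorphism `g`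
commuting with `A`. -/
def HyperinvariantSubspace {F V : Type*} [Field F] [AddCommGroup V] [Module F V]
    (A : Module.End F V) (Y : Submodule F V) : Prop :=
  ∀ g : Module.End F V, Commute g A → ∀ x ∈ Y, g x ∈ Y

/-- A subspace `Y` is characteristic for `A` if it is `A`-invariant and `g Y ⊆ Y` for every
invertible endomorphism `g` commuting with `A`. -/
def CharacteristicSubspace {F V : Type*} [Field F] [AddCommGroup V] [Module F V]
    (A : Module.End F V) (Y : Submodule F V) : Prop :=
  (∀ x ∈ Y, A x ∈ Y) ∧
    ∀ g : Module.End F V, IsUnit g → Commute g A → ∀ x ∈ Y, g x ∈ Y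

open Polynomial in
/-- A decomposition of `V` into cyclic `F[A]`-modules, with generators `c i` of order `p ^ k i` and
projections `e i`. -/
structure CycDec {F V : Type*} [Field F] [AddCommGroup V] [Module F V]
    (A : Module.End F V) (p : Polynomial F) {d : ℕ} (k : Fin d → ℕ) (c : Fin d → V)
    (e : Fin d → Module.End F V) : Prop where
  ann : ∀ i q, aeval A q (c i) = 0 ↔ p ^ k i ∣ q
  gen : ∀ x, ∃ q : Fin d → F[X], x = ∑ i, aeval A (q i) (c i)
  lift : ∀ i y, aeval A (p ^ k i) y = 0 →
    ∃ h : Module.End F V, Commute h A ∧ h (c i) = y ∧ ∀ l, l ≠ i → h (c l) = 0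
  ecomm : ∀ i, Commute (e i) A
  eself : ∀ i, e i (c i) = c i
  ene : ∀ i l, l ≠ i → e i (c l) = 0

section
open Polynomial

variable {F V : Type*} [Field F] [AddCommGroup V] [Module F V]

theorem aeval_comm_apply {A g : Module.End F V} (h : Commute g A) (q : F[X]) (x : V) :
    g (aeval A q x) = aeval A q (g x) := by
  have h1 : Commute g (aeval A q) := by
    induction q using Polynomial.induction_on' with
    | add a b ha hb => simpa using ha.add_right hb
    | monomial n a =>
      rw [aeval_monomial]
      exact (Algebra.commute_algebraMap_right a g).mul_right (h.pow_right n)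
  exact congrArg (fun f : Module.End F V => f x) h1.eq

theorem exists_cycDec [FiniteDimensional F V]
    (A : Module.End F V) (p : Polynomial F) (r : ℕ)
    (hirr : Irreducible p) (hmin : minpoly F A = p ^ r) :
    ∃ (d : ℕ) (k : Fin d → ℕ) (c : Fin d → V) (e : Fin d → Module.End F V),
      CycDec A p k c e := by
  suffices H : ∃ (d : ℕ) (k : Fin d → ℕ) (c : Fin d → V),
      (∀ i q, aeval A q (c i) = 0 ↔ p ^ k i ∣ q) ∧
      (∀ x, ∃ q : Fin d → F[X], x = ∑ i, aeval A (q i) (c i)) ∧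
      (∀ i y, aeval A (p ^ k i) y = 0 →
        ∃ h : Module.End F V, Commute h A ∧ h (c i) = y ∧ ∀ l, l ≠ i → h (c l) = 0) by
    obtain ⟨d, k, c, h1, h2, h3⟩ := H
    choose e he using fun i => h3 i (c i) ((h1 i _).2 dvd_rfl)
    exact ⟨d, k, c, e, h1, h2, h3, fun i => (he i).1, fun i => (he i).2.1, fun i => (he i).2.2⟩
  have hA : aeval A (p ^ r) = 0 := by rw [← hmin]; exact minpoly.aeval F A
  have htor : Module.IsTorsion' (Module.AEval' A) (Submonoid.powers p) := by
    rw [Submodule.isTorsion'_powers_iff]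
    intro x
    refine ⟨r, ?_⟩
    apply (Module.AEval'.of A).symm.injective
    erw [Module.AEval.of_symm_smul]
    rw [hA]; simp
  obtain ⟨d, k, ⟨φ⟩⟩ := Module.torsion_by_prime_power_decomposition hirr htor
  classical
  let g : Fin d → Module.AEval' A := fun i =>
    φ.symm (DirectSum.lof F[X] (Fin d) (fun i => F[X] ⧸ F[X] ∙ p ^ (k i : ℕ)) i
      (Submodule.Quotient.mk 1))
  have hsm : ∀ (q : F[X]) i, q • g i = φ.symm (DirectSum.lof F[X] (Fin d)
      (fun i => F[X] ⧸ F[X] ∙ p ^ (k i : ℕ)) i (Submodule.Quotient.mk q)) := by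
    intro q i
    simp only [g]
    rw [← map_smul, ← map_smul, ← Submodule.Quotient.mk_smul, smul_eq_mul, mul_one]
  have hof : ∀ (q : F[X]) (x : V), Module.AEval'.of A (aeval A q x) = q • Module.AEval'.of A x :=
    fun q x => rfl
  refine ⟨d, k, fun i => (Module.AEval'.of A).symm (g i), ?_, ?_, ?_⟩
  · intro i q
    rw [← (Module.AEval'.of A).map_eq_zero_iff, hof, LinearEquiv.apply_symm_apply, hsm,
      LinearEquiv.map_eq_zero_iff]
    rw [map_eq_zero_iff (DirectSum.lof F[X] (Fin d) (fun i => F[X] ⧸ F[X] ∙ p ^ (k i : ℕ)) i)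
      (DirectSum.of_injective (β := (fun i => F[X] ⧸ F[X] ∙ p ^ (k i : ℕ))) i)]
    rw [Submodule.Quotient.mk_eq_zero, Submodule.mem_span_singleton]
    simp only [smul_eq_mul, dvd_iff_exists_eq_mul_left, eq_comm]
  · intro x
    have : ∀ y : Module.AEval' A, ∃ q : Fin d → F[X], y = ∑ i, q i • g i := by
      intro y
      choose q hq using fun i => Submodule.Quotient.mk_surjective _ ((φ y) i)
      refine ⟨q, ?_⟩
      simp_rw [hsm]
      rw [← map_sum, LinearEquiv.eq_symm_apply]
      simp_rw [hq]
      exact (DirectSum.sum_univ_of (φ y)).symm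
    obtain ⟨q, hq⟩ := this (Module.AEval'.of A x)
    refine ⟨q, ?_⟩
    apply (Module.AEval'.of A).injective
    rw [map_sum]
    simp only [hof, LinearEquiv.apply_symm_apply]
    exact hq
  · intro i y hy
    have hy' : p ^ k i • Module.AEval'.of A y = 0 := by rw [← hof, hy, map_zero]
    let t : (F[X] ⧸ F[X] ∙ p ^ (k i : ℕ)) →ₗ[F[X]] Module.AEval' A :=
      Submodule.liftQ _ (LinearMap.toSpanSingleton F[X] _ (Module.AEval'.of A y)) (by
        rw [Submodule.span_singleton_le_iff_mem, LinearMap.mem_ker,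
          LinearMap.toSpanSingleton_apply, hy'])
    let H : Module.AEval' A →ₗ[F[X]] Module.AEval' A :=
      t ∘ₗ (DirectSum.component F[X] (Fin d) _ i) ∘ₗ φ.toLinearMap
    have HX : ∀ x, Module.AEval'.of A (A x) = (X : F[X]) • Module.AEval'.of A x :=
      fun x => (Module.AEval'.X_smul_of A x).symm
    let h : Module.End F V := (Module.AEval'.of A).symm.toLinearMap ∘ₗ (H.restrictScalars F) ∘ₗ
      (Module.AEval'.of A).toLinearMap
    have hh : ∀ x, Module.AEval'.of A (h x) = H (Module.AEval'.of A x) := fun x => by simp [h]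
    refine ⟨h, ?_, ?_, ?_⟩
    · apply LinearMap.ext
      intro x
      apply (Module.AEval'.of A).injective
      rw [Module.End.mul_apply, Module.End.mul_apply, hh, HX, HX, hh, map_smul]
    · apply (Module.AEval'.of A).injective
      rw [hh, LinearEquiv.apply_symm_apply]
      simp only [H, g, LinearMap.comp_apply, LinearEquiv.coe_coe, LinearEquiv.apply_symm_apply,
        DirectSum.component.lof_self]
      simp only [t]
      rw [Submodule.liftQ_apply, LinearMap.toSpanSingleton_apply, one_smul]
    · intro l hl
      apply (Module.AEval'.of A).injective
      rw [hh, LinearEquiv.apply_symm_apply, map_zero]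
      have : (DirectSum.component F[X] (Fin d) (fun i => F[X] ⧸ F[X] ∙ p ^ (k i : ℕ)) i)
        (φ (g l)) = 0 := by
        simp only [g, LinearEquiv.apply_symm_apply]
        rw [DirectSum.component.of, dif_neg hl]
      simp only [H, LinearMap.comp_apply, LinearEquiv.coe_coe]
      rw [this, map_zero]

namespace CycDec

variable {A : Module.End F V} {p : F[X]} {d : ℕ} {k : Fin d → ℕ} {c : Fin d → V}
  {e : Fin d → Module.End F V}

theorem e_sum (D : CycDec A p k c e) (q : Fin d → F[X]) (i : Fin d) :
    e i (∑ l, aeval A (q l) (c l)) = aeval A (q i) (c i) := by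
  rw [map_sum, Finset.sum_eq_single i]
  · rw [aeval_comm_apply (D.ecomm i), D.eself]
  · intro l _ hl
    rw [aeval_comm_apply (D.ecomm i), D.ene i l hl, map_zero]
  · simp

theorem e_exists (D : CycDec A p k c e) (i : Fin d) (x : V) :
    ∃ q : F[X], e i x = aeval A q (c i) := by
  obtain ⟨q, hq⟩ := D.gen x
  exact ⟨q i, by rw [hq, D.e_sum]⟩

theorem sum_e (D : CycDec A p k c e) (x : V) : ∑ i, e i x = x := by
  obtain ⟨q, hq⟩ := D.gen x
  conv_rhs => rw [hq]
  refine Finset.sum_congr rfl fun i _ => ?_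
  rw [hq, D.e_sum]

theorem e_e (D : CycDec A p k c e) (i : Fin d) (x : V) : e i (e i x) = e i x := by
  obtain ⟨q, hq⟩ := D.e_exists i x
  rw [hq, aeval_comm_apply (D.ecomm i), D.eself]

theorem e_e_ne (D : CycDec A p k c e) {i l : Fin d} (h : l ≠ i) (x : V) : e i (e l x) = 0 := by
  obtain ⟨q, hq⟩ := D.e_exists l x
  rw [hq, aeval_comm_apply (D.ecomm i), D.ene i l h, map_zero]

theorem pow_e (D : CycDec A p k c e) (i : Fin d) (x : V) :
    aeval A (p ^ k i) (e i x) = 0 := by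
  obtain ⟨q, hq⟩ := D.e_exists i x
  rw [hq, ← Module.End.mul_apply, ← map_mul, D.ann]
  exact dvd_mul_right _ _

theorem ext_gen (D : CycDec A p k c e) {g h : Module.End F V} (hg : Commute g A) (hh : Commute h A)
    (H : ∀ i, g (c i) = h (c i)) : g = h := by
  ext x
  obtain ⟨q, rfl⟩ := D.gen x
  rw [map_sum, map_sum]
  refine Finset.sum_congr rfl fun i _ => ?_
  rw [aeval_comm_apply hg, aeval_comm_apply hh, H]

end CycDec

theorem char_aeval {A : Module.End F V} {Y : Submodule F V} (hY : CharacteristicSubspace A Y)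
    (q : F[X]) {x : V} (hx : x ∈ Y) : aeval A q x ∈ Y := by
  induction q using Polynomial.induction_on generalizing x with
  | C a => simpa using Y.smul_mem a hx
  | add a b ha hb => simpa using Y.add_mem (ha hx) (hb hx)
  | monomial n a ih =>
    rw [pow_succ, ← mul_assoc, map_mul, Module.End.mul_apply, aeval_X]
    exact ih (hY.1 x hx)

namespace CycDec

variable {A : Module.End F V} {p : F[X]} {d : ℕ} {k : Fin d → ℕ} {c : Fin d → V}
  {e : Fin d → Module.End F V}

theorem off (D : CycDec A p k c e) {Y : Submodule F V} (hY : CharacteristicSubspace A Y)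
    (i : Fin d) (y : V) (hy : aeval A (p ^ k i) y = 0) (hey : e i y = 0) {x : V} (hx : x ∈ Y)
    (q : F[X]) (hq : e i x = aeval A q (c i)) : aeval A q y ∈ Y := by
  obtain ⟨h, hc, h1, h2⟩ := D.lift i y hy
  have he : h = h * e i := by
    apply D.ext_gen hc (hc.mul_left (D.ecomm i))
    intro l
    rw [Module.End.mul_apply]
    by_cases hl : l = i
    · subst hl; rw [D.eself]
    · rw [D.ene i l hl, h2 l hl, map_zero]
  have hx' : h x = aeval A q y := by
    rw [he, Module.End.mul_apply, hq, aeval_comm_apply hc, h1]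
  have hsq : h * h = 0 := by
    apply D.ext_gen (hc.mul_left hc) (Commute.zero_left _)
    intro l
    rw [Module.End.mul_apply]
    by_cases hl : l = i
    · subst hl
      rw [h1, he, Module.End.mul_apply, hey]; simp
    · rw [h2 l hl]; simp
  have hu : IsUnit (1 + h) := IsNilpotent.isUnit_one_add ⟨2, by rw [pow_two, hsq]⟩
  have := hY.2 (1 + h) hu ((Commute.one_left _).add_left hc) x hx
  rw [LinearMap.add_apply, Module.End.one_apply] at this
  rw [← hx']
  simpa using Y.sub_mem this hx

theorem hyper_of_e (D : CycDec A p k c e) {Y : Submodule F V} (hY : CharacteristicSubspace A Y)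
    (h : ∀ i, ∀ x ∈ Y, e i x ∈ Y) : HyperinvariantSubspace A Y := by
  intro g hg x hx
  rw [← D.sum_e x, map_sum]
  refine Y.sum_mem fun i _ => ?_
  obtain ⟨q, hq⟩ := D.e_exists i x
  obtain ⟨u, hu⟩ := D.e_exists i (g (c i))
  have h1 : aeval A q (g (c i) - e i (g (c i))) ∈ Y := by
    refine D.off hY i _ ?_ ?_ hx q hq
    · rw [map_sub, D.pow_e, ← aeval_comm_apply hg, (D.ann i _).2 dvd_rfl]; simp
    · rw [map_sub, D.e_e, sub_self]
  have h2 : aeval A q (e i (g (c i))) ∈ Y := by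
    rw [hu, ← Module.End.mul_apply, ← map_mul, mul_comm, map_mul, Module.End.mul_apply, ← hq]
    exact char_aeval hY u (h i x hx)
  rw [hq, aeval_comm_apply hg]
  have := Y.add_mem h1 h2
  rwa [← map_add, sub_add_cancel] at this

/-- `q` prime to `p` is invertible modulo powers of `p`. -/
theorem inv_poly (hirr : Irreducible p) {q : F[X]} (hq : ¬ p ∣ q) (m : ℕ) :
    ∃ u v, u * q + v * p ^ m = 1 := by
  have := ((hirr.coprime_iff_not_dvd.2 hq).pow_left (m := m)).symm
  obtain ⟨u, v, h⟩ := this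
  exact ⟨u, v, h⟩

theorem e_mem_of_unit (D : CycDec A p k c e) (hirr : Irreducible p) {r : ℕ}
    (hA : aeval A (p ^ r) = 0)
    {Y : Submodule F V} (hY : CharacteristicSubspace A Y)
    {q : F[X]} (h0 : ¬ p ∣ q) (h1 : ¬ p ∣ q - 1) (i : Fin d) (x : V) (hx : x ∈ Y) :
    e i x ∈ Y := by
  obtain ⟨u, v, huv⟩ := inv_poly hirr h0 r
  obtain ⟨u', v', huv'⟩ := inv_poly hirr h1 r
  have hu : aeval A u * aeval A q = 1 := by
    have := congrArg (aeval A) huv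
    simpa only [map_add, map_mul, hA, mul_zero, add_zero, map_one] using this
  have hu2 : aeval A q * aeval A u = 1 := by rw [← hu, ← map_mul, ← map_mul, mul_comm]
  have hu' : aeval A u' * aeval A (q - 1) = 1 := by
    have := congrArg (aeval A) huv'
    simpa only [map_add, map_mul, hA, mul_zero, add_zero, map_one] using this
  have hee : e i * e i = e i := by ext x; exact D.e_e i x
  have hce : ∀ w : F[X], e i * aeval A w = aeval A w * e i := fun w => by
    ext x; exact aeval_comm_apply (D.ecomm i) w x
  have hAw : ∀ w : F[X], Commute (aeval A w) A := fun w => by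
    have := Polynomial.aeval_X (R := F) A
    conv_rhs => rw [← this]
    exact (Commute.all w X).map (aeval A)
  let G : F[X] → Module.End F V := fun w => 1 + aeval A (w - 1) * e i
  have hG : ∀ w w' : F[X], aeval A w * aeval A w' = 1 → G w * G w' = 1 := by
    intro w w' hw
    have : aeval A (w - 1) * e i * (aeval A (w' - 1) * e i)
        = aeval A (w - 1) * aeval A (w' - 1) * e i := by
      rw [mul_assoc, ← mul_assoc (e i), hce, mul_assoc, hee, mul_assoc]
    simp only [G, mul_add, add_mul, one_mul, mul_one]
    rw [this]
    simp only [map_sub, map_one, sub_mul, mul_sub, hw, one_mul, mul_one]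
    abel
  have hGu : IsUnit (G q) := ⟨⟨G q, G u, hG _ _ hu2, hG _ _ hu⟩, rfl⟩
  have hGc : Commute (G q) A := (Commute.one_left _).add_left ((hAw _).mul_left (D.ecomm i))
  have h3 := hY.2 _ hGu hGc x hx
  have h4 : aeval A (q - 1) (e i x) ∈ Y := by
    have := Y.sub_mem h3 hx
    simpa only [G, LinearMap.add_apply, Module.End.one_apply, Module.End.mul_apply,
      add_sub_cancel_left] using this
  have := char_aeval hY u' h4
  rwa [← Module.End.mul_apply, hu', Module.End.one_apply] at this

theorem bad_unique (D : CycDec A p k c e) {Y : Submodule F V} (hY : CharacteristicSubspace A Y)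
    {i j : Fin d} (hij : j ≠ i) (hk : k i = k j) {x : V} (hx : x ∈ Y) : e i x ∈ Y := by
  obtain ⟨q, hq⟩ := D.e_exists i x
  have h1 : aeval A q (c j) ∈ Y :=
    D.off hY i (c j) (by rw [hk]; exact (D.ann j _).2 dvd_rfl) (D.ene i j hij) hx q hq
  rw [hq]
  refine D.off hY j (c i) (by rw [← hk]; exact (D.ann i _).2 dvd_rfl) (D.ene j i hij.symm) h1 q ?_
  rw [aeval_comm_apply (D.ecomm j), D.eself]

theorem bad_pos (D : CycDec A p k c e) {Y : Submodule F V} {i : Fin d} (hk : k i = 0) (x : V) :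
    e i x ∈ Y := by
  have := D.pow_e i x
  rw [hk] at this
  simp at this
  rw [this]; exact Y.zero_mem

theorem poly_val (hirr : Irreducible p) (q q' : F[X]) (m : ℕ) :
    (∃ t v, q' = q * t + p ^ m * v) ∨ (∃ t v, q = p * q' * t + p ^ m * v) := by
  by_cases h0 : q = 0
  · right; exact ⟨0, 0, by simp [h0]⟩
  by_cases h0' : q' = 0
  · left; exact ⟨0, 0, by simp [h0']⟩
  obtain ⟨u, hu, hu'⟩ :=
    (FiniteMultiplicity.of_prime_left hirr.prime h0).exists_eq_pow_mul_and_not_dvd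
  obtain ⟨w, hw, hw'⟩ :=
    (FiniteMultiplicity.of_prime_left hirr.prime h0').exists_eq_pow_mul_and_not_dvd
  set α := multiplicity p q
  set β := multiplicity p q'
  obtain ⟨s, v, hs⟩ := inv_poly hirr hu' m
  obtain ⟨s', v', hs'⟩ := inv_poly hirr hw' m
  rcases le_or_gt α β with h | h
  · left
    obtain ⟨n, hn⟩ := Nat.exists_eq_add_of_le h
    refine ⟨s * p ^ n * w, v * q', ?_⟩
    rw [hn, pow_add] at hw
    linear_combination (-q') * hs - s * p ^ n * w * hu + s * u * hw
  · right
    obtain ⟨n, hn⟩ := Nat.exists_eq_add_of_le (Nat.succ_le_of_lt h)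
    refine ⟨s' * p ^ n * u, v' * q, ?_⟩
    rw [hn, pow_add, Nat.succ_eq_add_one, pow_succ] at hu
    linear_combination (-q) * hs' - p * s' * p ^ n * u * hw + s' * w * hu

theorem adjacent (D : CycDec A p k c e) (hirr : Irreducible p)
    {Y : Submodule F V} (hY : CharacteristicSubspace A Y)
    {i j : Fin d} (hij : k j = k i + 1) {x : V} (hx : x ∈ Y) (hx2 : e i x + e j x ∈ Y) :
    e i x ∈ Y ∧ e j x ∈ Y := by
  have hne : i ≠ j := by rintro rfl; omega
  obtain ⟨q, hq⟩ := D.e_exists i x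
  obtain ⟨q', hq'⟩ := D.e_exists j x
  have h1 : aeval A q (aeval A p (c j)) ∈ Y := by
    refine D.off hY i _ ?_ ?_ hx q hq
    · rw [← Module.End.mul_apply, ← map_mul, D.ann, hij, pow_succ]
    · rw [aeval_comm_apply (D.ecomm i), D.ene i j hne.symm, map_zero]
  have h2 : aeval A q' (c i) ∈ Y := by
    refine D.off hY j _ ?_ (D.ene j i hne) hx q' hq'
    rw [D.ann, hij, pow_succ]; exact dvd_mul_right _ _
  suffices h : e i x ∈ Y ∨ e j x ∈ Y by
    rcases h with h | h
    · exact ⟨h, by simpa using Y.sub_mem hx2 h⟩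
    · exact ⟨by simpa using Y.sub_mem hx2 h, h⟩
  rcases poly_val hirr q' q (k j) with ⟨t, v, h⟩ | ⟨t, v, h⟩
  · left
    have h3 : aeval A (p ^ k j * v) (c i) = 0 := by
      rw [D.ann, hij, pow_succ, mul_assoc]; exact dvd_mul_right _ _
    rw [hq, h, map_add, LinearMap.add_apply, h3, add_zero, mul_comm, map_mul, Module.End.mul_apply]
    exact char_aeval hY t h2
  · right
    have h3 : aeval A (p ^ k j * v) (c j) = 0 := by
      rw [D.ann]; exact dvd_mul_right _ _
    have h4 := char_aeval hY t h1
    rw [← Module.End.mul_apply, ← Module.End.mul_apply, ← map_mul, ← map_mul] at h4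
    rw [hq', h, map_add, LinearMap.add_apply, h3, add_zero]
    convert h4 using 3
    ring

theorem exists_bad_pair (D : CycDec A p k c e) (hirr : Irreducible p)
    {Y : Submodule F V} (hY : CharacteristicSubspace A Y) (hn : ¬ HyperinvariantSubspace A Y) :
    ∃ i j, 0 < k i ∧ k i + 1 < k j ∧ (∀ l, k l = k i → l = i) ∧ (∀ l, k l = k j → l = j) := by
  let bad : Fin d → Prop := fun i => ∃ x ∈ Y, e i x ∉ Y
  have good : ∀ l, ¬ bad l → ∀ x ∈ Y, e l x ∈ Y := by
    intro l hl x hx; by_contra h; exact hl ⟨x, hx, h⟩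
  have huniq : ∀ i, bad i → ∀ l, k l = k i → l = i := by
    rintro i ⟨x, hx, h⟩ l hl
    by_contra hne
    exact h (D.bad_unique hY hne hl.symm hx)
  have hpos : ∀ i, bad i → 0 < k i := by
    rintro i ⟨x, hx, h⟩
    by_contra h0
    exact h (D.bad_pos (by omega) x)
  suffices h : ∃ i j, bad i ∧ bad j ∧ k i + 1 < k j by
    obtain ⟨i, j, hi, hj, hlt⟩ := h
    exact ⟨i, j, hpos i hi, hlt, huniq i hi, huniq j hj⟩
  by_contra hno
  push Not at hno
  apply hn
  apply D.hyper_of_e hY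
  by_contra hb
  push Not at hb
  obtain ⟨i, x, hx, hix⟩ := hb
  have hi : bad i := ⟨x, hx, hix⟩
  classical
  have hsum : e i x = x - ∑ l ∈ Finset.univ.erase i, e l x := by
    rw [eq_sub_iff_add_eq, Finset.add_sum_erase _ (fun l => e l x) (Finset.mem_univ i), D.sum_e]
  have hj : ∃ j, j ≠ i ∧ bad j := by
    by_contra hall
    push Not at hall
    apply hix
    rw [hsum]
    refine Y.sub_mem hx (Y.sum_mem fun l hl => ?_)
    exact good l (hall l (Finset.ne_of_mem_erase hl)) x hx
  obtain ⟨j, hji, hj⟩ := hj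
  have hkne : k j ≠ k i := fun h => hji (huniq i hi j h)
  have hothers : ∀ l, l ≠ i → l ≠ j → ¬ bad l := by
    intro l hli hlj hl
    have a1 : k l ≠ k i := fun h => hli (huniq i hi l h)
    have a2 : k l ≠ k j := fun h => hlj (huniq j hj l h)
    have := hno i j hi hj
    have := hno j i hj hi
    have := hno i l hi hl
    have := hno l i hl hi
    have := hno j l hj hl
    have := hno l j hl hj
    omega
  have hx2 : e i x + e j x ∈ Y := by
    have hmem : j ∈ Finset.univ.erase i := Finset.mem_erase.2 ⟨hji, Finset.mem_univ j⟩
    have : e i x + e j x = x - ∑ l ∈ (Finset.univ.erase i).erase j, e l x := by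
      rw [hsum, ← Finset.add_sum_erase _ (fun l => e l x) hmem]; abel
    rw [this]
    refine Y.sub_mem hx (Y.sum_mem fun l hl => ?_)
    rw [Finset.mem_erase, Finset.mem_erase] at hl
    exact good l (hothers l hl.2.1 hl.1) x hx
  have := hno i j hi hj
  have := hno j i hj hi
  rcases (by omega : k j = k i + 1 ∨ k i = k j + 1) with h | h
  · exact hix (D.adjacent hirr hY h hx hx2).1
  · exact hix (D.adjacent hirr hY h hx (by rwa [add_comm])).2

end CycDec

/-- `ker N^(b+1) / jordW N b` has dimension the number of blocks of size `b+1`. -/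
def jordW (N : Module.End F V) (b : ℕ) : Submodule F V :=
  LinearMap.ker (N ^ b) ⊔ Submodule.map N (LinearMap.ker (N ^ (b + 2)))

theorem ker_pow_le (N : Module.End F V) {m n : ℕ} (h : m ≤ n) :
    LinearMap.ker (N ^ m) ≤ LinearMap.ker (N ^ n) := by
  intro x hx
  rw [LinearMap.mem_ker] at *
  obtain ⟨t, rfl⟩ := Nat.exists_eq_add_of_le' h
  rw [pow_add, Module.End.mul_apply, hx, map_zero]

theorem mem_ker_pow_succ (N : Module.End F V) (m : ℕ) (x : V) :
    N x ∈ LinearMap.ker (N ^ m) ↔ x ∈ LinearMap.ker (N ^ (m + 1)) := by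
  rw [LinearMap.mem_ker, LinearMap.mem_ker, pow_succ, Module.End.mul_apply]

theorem jordW_le (N : Module.End F V) (b : ℕ) : jordW N b ≤ LinearMap.ker (N ^ (b + 1)) := by
  refine sup_le (ker_pow_le N (Nat.le_succ b)) ?_
  rintro _ ⟨x, hx, rfl⟩
  exact (mem_ker_pow_succ N _ x).2 hx

theorem finrank_map_ker [FiniteDimensional F V] (N : Module.End F V) (m : ℕ) :
    Module.finrank F (Submodule.map N (LinearMap.ker (N ^ (m + 1)))) +
      Module.finrank F (LinearMap.ker N) = Module.finrank F (LinearMap.ker (N ^ (m + 1))) := by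
  have h := LinearMap.finrank_range_add_finrank_ker (N.domRestrict (LinearMap.ker (N ^ (m + 1))))
  have hle : LinearMap.ker N ≤ LinearMap.ker (N ^ (m + 1)) := by
    simpa using ker_pow_le N (show 1 ≤ m + 1 by omega)
  rw [LinearMap.range_domRestrict, LinearMap.ker_domRestrict] at h
  rw [← h, ← (Submodule.comapSubtypeEquivOfLe hle).finrank_eq]

theorem finrank_jordW [FiniteDimensional F V] (N : Module.End F V) (b : ℕ) :
    Module.finrank F (jordW N b) + Module.finrank F (LinearMap.ker (N ^ (b + 1))) =
      Module.finrank F (LinearMap.ker (N ^ b)) + Module.finrank F (LinearMap.ker (N ^ (b + 2))) := by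
  have h : Module.finrank F (jordW N b) + _ = _ :=
    Submodule.finrank_sup_add_finrank_inf_eq (LinearMap.ker (N ^ b))
    (Submodule.map N (LinearMap.ker (N ^ (b + 2))))
  have hinf : LinearMap.ker (N ^ b) ⊓ Submodule.map N (LinearMap.ker (N ^ (b + 2))) =
      Submodule.map N (LinearMap.ker (N ^ (b + 1))) := by
    ext y
    constructor
    · rintro ⟨h1, x, hx, rfl⟩
      exact ⟨x, (mem_ker_pow_succ N b x).1 h1, rfl⟩
    · rintro ⟨x, hx, rfl⟩
      exact ⟨(mem_ker_pow_succ N b x).2 hx, x, ker_pow_le N (by omega) hx, rfl⟩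
  rw [hinf] at h
  have h1 := finrank_map_ker N b
  have h2 : _ = Module.finrank F (LinearMap.ker (N ^ (b + 2))) := finrank_map_ker N (b + 1)
  rw [show b + 1 + 1 = b + 2 from rfl] at h2
  omega

theorem jordW_inv {N g : Module.End F V} (hg : Commute g N) (b : ℕ) {x : V} (hx : x ∈ jordW N b) :
    g x ∈ jordW N b := by
  have hk : ∀ m, ∀ x ∈ LinearMap.ker (N ^ m), g x ∈ LinearMap.ker (N ^ m) := by
    intro m x hx
    rw [LinearMap.mem_ker] at *
    rw [← Module.End.mul_apply, ← (hg.pow_right m).eq, Module.End.mul_apply, hx, map_zero]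
  obtain ⟨u, hu, _, ⟨v, hv, rfl⟩, rfl⟩ := Submodule.mem_sup.1 hx
  rw [map_add]
  refine Submodule.add_mem_sup (hk _ u hu) ⟨g v, hk _ v hv, ?_⟩
  rw [← Module.End.mul_apply, ← hg.eq, Module.End.mul_apply]

theorem exists_of_finrank [FiniteDimensional F V] {W U : Submodule F V} (hle : W ≤ U)
    (h : Module.finrank F U = Module.finrank F W + 1) :
    ∃ c ∈ U, c ∉ W ∧ ∀ x ∈ U, ∃ t : F, x - t • c ∈ W := by
  have : ∃ c ∈ U, c ∉ W := by
    by_contra hno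
    push Not at hno
    have : U = W := le_antisymm hno hle
    rw [this] at h; omega
  obtain ⟨c, hc, hcW⟩ := this
  refine ⟨c, hc, hcW, ?_⟩
  have hlt : W < W ⊔ Submodule.span F {c} := by
    refine lt_of_le_of_ne le_sup_left fun heq => hcW ?_
    rw [heq]
    exact Submodule.mem_sup_right (Submodule.mem_span_singleton_self c)
  have h1 := Submodule.finrank_lt_finrank_of_lt hlt
  have h2 : W ⊔ Submodule.span F {c} ≤ U := sup_le hle (by simpa using hc)
  have h3 := Submodule.eq_of_le_of_finrank_le h2 (by omega)
  intro x hx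
  rw [← h3] at hx
  obtain ⟨w, hw, y, hy, rfl⟩ := Submodule.mem_sup.1 hx
  obtain ⟨t, rfl⟩ := Submodule.mem_span_singleton.1 hy
  exact ⟨t, by simpa using hw⟩

theorem finrank_of_exists [FiniteDimensional F V] {W U : Submodule F V} (hle : W ≤ U) {c : V}
    (hc : c ∈ U) (hcW : c ∉ W) (h : ∀ x ∈ U, ∃ t : F, x - t • c ∈ W) :
    Module.finrank F U = Module.finrank F W + 1 := by
  have hU : U = W ⊔ Submodule.span F {c} := by
    apply le_antisymm
    · intro x hx
      obtain ⟨t, ht⟩ := h x hx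
      have := Submodule.add_mem_sup ht (Submodule.smul_mem _ t (Submodule.mem_span_singleton_self c))
      simpa using this
    · exact sup_le hle (by simpa using hc)
  have hc0 : c ≠ 0 := fun h => hcW (h ▸ W.zero_mem)
  have hd : W ⊓ Submodule.span F {c} = ⊥ :=
    disjoint_iff.1 ((Submodule.disjoint_span_singleton' hc0).2 hcW)
  have := Submodule.finrank_sup_add_finrank_inf_eq W (Submodule.span F {c})
  rw [hd, finrank_bot, finrank_span_singleton hc0] at this
  rw [hU]; omega

namespace CycDec

variable {A : Module.End F V} {p : F[X]} {d : ℕ} {k : Fin d → ℕ} {c : Fin d → V}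
  {e : Fin d → Module.End F V}

theorem commN {g : Module.End F V} (hg : Commute g A) (q : F[X]) : Commute g (aeval A q) := by
  apply LinearMap.ext
  intro x
  exact aeval_comm_apply hg q x

theorem comp_mem_W (D : CycDec A p k c e) (hirr : Irreducible p) {b : ℕ} {x : V}
    (hx : x ∈ LinearMap.ker ((aeval A p) ^ (b + 1))) {l : Fin d} (hl : k l ≠ b + 1) :
    e l x ∈ jordW (aeval A p) b := by
  obtain ⟨q, hq⟩ := D.e_exists l x
  have hx' : aeval A (p ^ (b + 1)) (e l x) = 0 := by
    rw [← aeval_comm_apply (D.ecomm l), map_pow, LinearMap.mem_ker.1 hx, map_zero]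
  rcases lt_or_gt_of_ne hl with h | h
  · apply Submodule.mem_sup_left
    refine ker_pow_le _ (show k l ≤ b by omega) ?_
    rw [LinearMap.mem_ker, ← map_pow, D.pow_e]
  · apply Submodule.mem_sup_right
    have h1 := hx'
    rw [hq, ← Module.End.mul_apply, ← map_mul, D.ann] at h1
    obtain ⟨n, hn⟩ := Nat.exists_eq_add_of_le (Nat.succ_le_of_lt h)
    have hp : p ∣ q := by
      have h2 : p ^ (b + 1) * p ∣ p ^ (b + 1) * q := by
        refine dvd_trans ?_ h1
        rw [← pow_succ]
        exact pow_dvd_pow p (by omega)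
      exact (mul_dvd_mul_iff_left (pow_ne_zero _ hirr.ne_zero)).1 h2
    obtain ⟨s, rfl⟩ := hp
    have he : e l x = aeval A p (aeval A s (c l)) := by
      rw [hq, map_mul, Module.End.mul_apply]
    refine ⟨aeval A s (c l), ?_, he.symm⟩
    rw [he, map_pow] at hx'
    exact (mem_ker_pow_succ _ _ _).1 hx'

theorem count (D : CycDec A p k c e) [FiniteDimensional F V] (hirr : Irreducible p)
    (H : ∀ q : F[X], p ∣ q ∨ p ∣ q - 1) {b : ℕ} {i : Fin d} (hi : k i = b + 1)
    (hu : ∀ l, k l = k i → l = i) :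
    2 * Module.finrank F (LinearMap.ker ((aeval A p) ^ (b + 1))) =
      Module.finrank F (LinearMap.ker ((aeval A p) ^ b)) +
      Module.finrank F (LinearMap.ker ((aeval A p) ^ (b + 2))) + 1 := by
  have h1 := finrank_jordW (aeval A p) b
  have hc : c i ∈ LinearMap.ker (aeval A p ^ (b + 1)) := by
    rw [LinearMap.mem_ker, ← map_pow, D.ann, hi]
  have hcW : c i ∉ jordW (aeval A p) b := by
    intro hmem
    obtain ⟨u, hu, _, ⟨v, hv, rfl⟩, huv⟩ := Submodule.mem_sup.1 hmem
    obtain ⟨q, hq⟩ := D.e_exists i v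
    have h2 : aeval A (p ^ b) (c i) = aeval A (p ^ (b + 1)) (e i v) := by
      conv_lhs => rw [← D.eself i, ← huv, ← aeval_comm_apply (D.ecomm i), map_add, map_pow,
        LinearMap.mem_ker.1 hu, zero_add, ← Module.End.mul_apply (aeval A p ^ b), ← pow_succ, ← map_pow,
        aeval_comm_apply (D.ecomm i)]
    rw [← hi, D.pow_e, D.ann, hi] at h2
    have := (pow_dvd_pow_iff hirr.ne_zero hirr.not_isUnit).1 h2
    omega
  have := finrank_of_exists (jordW_le (aeval A p) b) hc hcW (by
    intro x hx
    obtain ⟨q, hq⟩ := D.e_exists i x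
    have hx2 : x - e i x ∈ jordW (aeval A p) b := by
      classical
      have hs : x - e i x = ∑ l ∈ Finset.univ.erase i, e l x := by
        rw [sub_eq_iff_eq_add', Finset.add_sum_erase _ (fun l => e l x) (Finset.mem_univ i),
          D.sum_e]
      rw [hs]
      refine Submodule.sum_mem _ fun l hl => D.comp_mem_W hirr hx ?_
      intro h
      exact Finset.ne_of_mem_erase hl (hu l (h.trans hi.symm))
    have hp : ∀ s : F[X], aeval A (p * s) (c i) ∈ jordW (aeval A p) b := by
      intro s
      apply Submodule.mem_sup_left
      rw [LinearMap.mem_ker, ← map_pow, ← Module.End.mul_apply, ← map_mul, D.ann, hi, pow_succ]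
      exact mul_dvd_mul_left _ (dvd_mul_right _ _)
    rcases H q with ⟨s, hs⟩ | ⟨s, hs⟩
    · refine ⟨0, ?_⟩
      have := Submodule.add_mem _ hx2 (hp s)
      rwa [← hs, ← hq, sub_add_cancel, ← sub_zero x, ← zero_smul F (c i)] at this
    · refine ⟨1, ?_⟩
      have := Submodule.add_mem _ hx2 (hp s)
      rwa [← hs, map_sub, LinearMap.sub_apply, ← hq, map_one, Module.End.one_apply,
        sub_add_sub_cancel, ← one_smul F (c i)] at this)
  omega

theorem converse (D : CycDec A p k c e) [FiniteDimensional F V] (hirr : Irreducible p)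
    (h2 : ∀ t : F, t = 0 ∨ t = 1) (lam : F) (hA : A = aeval A p + lam • 1) {b b' : ℕ}
    (hbb : b + 1 < b')
    (hb : Module.finrank F (LinearMap.ker ((aeval A p) ^ (b + 1))) =
      Module.finrank F (jordW (aeval A p) b) + 1)
    (hb' : Module.finrank F (LinearMap.ker ((aeval A p) ^ (b' + 1))) =
      Module.finrank F (jordW (aeval A p) b') + 1) :
    ∃ Y : Submodule F V, CharacteristicSubspace A Y ∧ ¬ HyperinvariantSubspace A Y := by
  set N := aeval A p with hN
  obtain ⟨x, hx, hxW, hxt⟩ := exists_of_finrank (jordW_le N b) hb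
  obtain ⟨y, hy, hyW, hyt⟩ := exists_of_finrank (jordW_le N b') hb'
  let W := jordW N b ⊔ Submodule.map N (jordW N b')
  have hcN : ∀ {g : Module.End F V}, Commute g A → Commute g N := fun hg => commN hg p
  have hgN : ∀ {g : Module.End F V}, Commute g A → ∀ v, g (N v) = N (g v) := fun hg v =>
    aeval_comm_apply hg p v
  have hWinv : ∀ {g : Module.End F V}, Commute g A → ∀ w ∈ W, g w ∈ W := by
    intro g hg w hw
    obtain ⟨u, hu, _, ⟨v, hv, rfl⟩, rfl⟩ := Submodule.mem_sup.1 hw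
    rw [map_add, hgN hg]
    exact Submodule.add_mem_sup (jordW_inv (hcN hg) b hu) ⟨_, jordW_inv (hcN hg) b' hv, rfl⟩
  have hxW' : x ∉ W := by
    intro hw
    obtain ⟨u, hu, _, ⟨v, hv, rfl⟩, huv⟩ := Submodule.mem_sup.1 hw
    apply hxW
    rw [← huv]
    refine Submodule.add_mem _ hu (Submodule.mem_sup_right ⟨v, ?_, rfl⟩)
    apply (mem_ker_pow_succ N _ v).1
    have : N v = x - u := by rw [← huv]; abel
    rw [this]
    exact Submodule.sub_mem _ hx (jordW_le N b hu)
  have hyW' : N y ∉ W := by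
    intro hw
    obtain ⟨u, hu, _, ⟨v, hv, rfl⟩, huv⟩ := Submodule.mem_sup.1 hw
    apply hyW
    have h3 : y - v ∈ jordW N b' := by
      apply Submodule.mem_sup_left
      refine ker_pow_le N (show b + 2 ≤ b' by omega) ?_
      apply (mem_ker_pow_succ N _ _).1
      have : N (y - v) = u := by rw [map_sub, ← huv]; abel
      rw [this]
      exact jordW_le N b hu
    simpa using Submodule.add_mem _ h3 hv
  have hfix : ∀ {g : Module.End F V}, IsUnit g → Commute g A → ∀ {m : ℕ} {v : V},
      v ∈ LinearMap.ker (N ^ (m + 1)) → v ∉ jordW N m →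
      (∀ u ∈ LinearMap.ker (N ^ (m + 1)), ∃ t : F, u - t • v ∈ jordW N m) →
      g v - v ∈ jordW N m := by
    intro g hu hg m v hv hvW hvt
    have hgv : g v ∈ LinearMap.ker (N ^ (m + 1)) := by
      rw [LinearMap.mem_ker] at *
      rw [← Module.End.mul_apply, ← ((hcN hg).pow_right _).eq, Module.End.mul_apply, hv, map_zero]
    obtain ⟨t, ht⟩ := hvt _ hgv
    rcases h2 t with rfl | rfl
    · exfalso
      rw [zero_smul, sub_zero] at ht
      obtain ⟨G, rfl⟩ := hu
      have hGc : Commute (↑G⁻¹ : Module.End F V) A := hg.units_inv_left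
      have := jordW_inv (hcN hGc) m ht
      rw [← Module.End.mul_apply, Units.inv_mul, Module.End.one_apply] at this
      exact hvW this
    · rwa [one_smul] at ht
  let z := x + N y
  have hz : z ∈ W ⊔ Submodule.span F {z} :=
    Submodule.mem_sup_right (Submodule.mem_span_singleton_self z)
  refine ⟨W ⊔ Submodule.span F {z}, ⟨?_, ?_⟩, ?_⟩
  · have hNz : N z ∈ W := by
      simp only [z, map_add]
      refine Submodule.add_mem_sup (Submodule.mem_sup_left ?_) ⟨N y, Submodule.mem_sup_left ?_, rfl⟩
      · exact (mem_ker_pow_succ N b x).2 hx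
      · exact (mem_ker_pow_succ N b' y).2 hy
    intro v hv
    obtain ⟨w, hw, _, hy, rfl⟩ := Submodule.mem_sup.1 hv
    obtain ⟨t, rfl⟩ := Submodule.mem_span_singleton.1 hy
    rw [map_add, map_smul]
    refine Submodule.add_mem _ (Submodule.mem_sup_left (hWinv (Commute.refl A) w hw))
      (Submodule.smul_mem _ t ?_)
    rw [hA]
    simp only [LinearMap.add_apply, LinearMap.smul_apply, Module.End.one_apply]
    exact Submodule.add_mem _ (Submodule.mem_sup_left hNz) (Submodule.smul_mem _ _ hz)
  · intro g hu hg v hv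
    obtain ⟨w, hw, _, hy', rfl⟩ := Submodule.mem_sup.1 hv
    obtain ⟨t, rfl⟩ := Submodule.mem_span_singleton.1 hy'
    rw [map_add, map_smul]
    refine Submodule.add_mem _ (Submodule.mem_sup_left (hWinv hg w hw))
      (Submodule.smul_mem _ t ?_)
    have h3 : g z - z ∈ W := by
      have : g z - z = (g x - x) + N (g y - y) := by
        simp only [z, map_add, map_sub, hgN hg]; abel
      rw [this]
      exact Submodule.add_mem_sup (hfix hu hg hx hxW hxt) ⟨_, hfix hu hg hy hyW hyt, rfl⟩
    have := Submodule.add_mem _ (Submodule.mem_sup_left h3) hz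
    rwa [sub_add_cancel] at this
  · intro hyp
    classical
    let E : Module.End F V := ∑ l ∈ Finset.univ.filter (fun l => k l = b + 1), e l
    have hE : Commute E A := Commute.sum_left _ _ _ fun l _ => D.ecomm l
    have hEx : E x - x ∈ jordW N b := by
      have h4 := Finset.sum_filter_add_sum_filter_not Finset.univ (fun l => k l = b + 1)
        (fun l => e l x)
      rw [D.sum_e] at h4
      have h5 : E x - x = - ∑ l ∈ Finset.univ.filter (fun l => ¬ k l = b + 1), e l x := by
        simp only [E, LinearMap.sum_apply]
        rw [sub_eq_iff_eq_add, eq_neg_add_iff_add_eq, add_comm]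
        exact h4
      rw [h5]
      refine Submodule.neg_mem _ (Submodule.sum_mem _ fun l hl => ?_)
      exact D.comp_mem_W hirr hx (Finset.mem_filter.1 hl).2
    have hEy : E y ∈ jordW N b' := by
      apply Submodule.mem_sup_left
      refine ker_pow_le N (show b + 1 ≤ b' by omega) ?_
      simp only [E, LinearMap.sum_apply]
      refine Submodule.sum_mem _ fun l hl => ?_
      rw [LinearMap.mem_ker, hN, ← map_pow, ← (Finset.mem_filter.1 hl).2, D.pow_e]
    have h6 := hyp E hE z hz
    have h7 : E z - x ∈ W := by
      have : E z - x = (E x - x) + N (E y) := by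
        simp only [z, map_add, hgN hE]; abel
      rw [this]
      exact Submodule.add_mem_sup hEx ⟨_, hEy, rfl⟩
    obtain ⟨w, hw, _, hy', h8⟩ := Submodule.mem_sup.1 h6
    obtain ⟨t, rfl⟩ := Submodule.mem_span_singleton.1 hy'
    rcases h2 t with rfl | rfl
    · rw [zero_smul, add_zero] at h8
      rw [← h8] at h7
      exact hxW' (by simpa using Submodule.sub_mem _ hw h7)
    · rw [← h8, one_smul] at h7
      apply hyW'
      have := Submodule.sub_mem _ h7 hw
      simp only [z] at this
      convert this using 1
      abel

end CycDec

theorem small_residue {p : F[X]} (hirr : Irreducible p) (H : ∀ q : F[X], p ∣ q ∨ p ∣ q - 1) :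
    (∀ t : F, t = 0 ∨ t = 1) ∧ ∃ lam : F, p = X - C lam := by
  have hC : ∀ t : F, p ∣ C t → t = 0 := by
    intro t ht
    by_contra h0
    exact hirr.not_isUnit (isUnit_of_dvd_unit ht (isUnit_C.2 (isUnit_iff_ne_zero.2 h0)))
  have h2 : ∀ t : F, t = 0 ∨ t = 1 := by
    intro t
    rcases H (C t) with h | h
    · exact Or.inl (hC t h)
    · right
      rw [← C_1, ← C_sub] at h
      exact sub_eq_zero.1 (hC _ h)
  refine ⟨h2, ?_⟩
  have : ∃ lam : F, p ∣ X - C lam := by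
    rcases H X with h | h
    · exact ⟨0, by simpa using h⟩
    · exact ⟨1, by simpa using h⟩
  obtain ⟨lam, hl⟩ := this
  refine ⟨lam, ?_⟩
  obtain ⟨u, hu⟩ := hirr.associated_of_dvd (irreducible_X_sub_C lam) hl
  obtain ⟨t, ht, hu'⟩ := Polynomial.isUnit_iff.1 u.isUnit
  have : t = 1 := (h2 t).resolve_left ht.ne_zero
  rw [← hu, ← hu', this, C_1, mul_one]

end

/-- If the minimal polynomial of `A` is `p ^ r` with `p` irreducible and
separable, then a characteristic non-hyperinvariant subspace for `A` exists iff `F` has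
exactly two elements, `p = x − λ` has degree 1 (so that `N = A − λ·id` is nilpotent), and
for some `r', s` with `s > r' + 1` the Jordan form of `N` has exactly one block of size `s`
and exactly one block of size `r'` (block counts expressed via kernel dimensions). -/
theorem char_not_hyperinv_iff_card_two_deg_one_shoda
    {F V : Type*} [Field F] [AddCommGroup V] [Module F V] [FiniteDimensional F V]
    (A : Module.End F V) (p : Polynomial F) (r : ℕ) (hr : 0 < r)
    (hirr : Irreducible p) (hsep : p.Separable)
    (hmin : minpoly F A = p ^ r) :
    (∃ Y : Submodule F V,
        CharacteristicSubspace A Y ∧ ¬ HyperinvariantSubspace A Y) ↔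
      Nat.card F = 2 ∧
      ∃ lam : F, p = Polynomial.X - Polynomial.C lam ∧
        ∃ r' s : ℕ, 0 < r' ∧ r' + 1 < s ∧
          (2 * Module.finrank F (LinearMap.ker ((A - lam • 1) ^ s)) =
            Module.finrank F (LinearMap.ker ((A - lam • 1) ^ (s - 1))) +
            Module.finrank F (LinearMap.ker ((A - lam • 1) ^ (s + 1))) + 1) ∧
          (2 * Module.finrank F (LinearMap.ker ((A - lam • 1) ^ r')) =
            Module.finrank F (LinearMap.ker ((A - lam • 1) ^ (r' - 1))) +
            Module.finrank F (LinearMap.ker ((A - lam • 1) ^ (r' + 1))) + 1) := by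
  classical
  obtain ⟨d, k, c, e, D⟩ := exists_cycDec A p r hirr hmin
  have hA : Polynomial.aeval A (p ^ r) = 0 := by rw [← hmin]; exact minpoly.aeval F A
  have hN : ∀ lam : F, p = Polynomial.X - Polynomial.C lam →
      A - lam • (1 : Module.End F V) = Polynomial.aeval A p := by
    rintro lam rfl
    simp [Algebra.algebraMap_eq_smul_one]
  constructor
  · rintro ⟨Y, hY, hn⟩
    have H : ∀ q : Polynomial F, p ∣ q ∨ p ∣ q - 1 := by
      intro q
      by_contra hq
      push Not at hq
      exact hn (D.hyper_of_e hY fun i x hx => D.e_mem_of_unit hirr hA hY hq.1 hq.2 i x hx)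
    obtain ⟨h2, lam, hl⟩ := small_residue hirr H
    refine ⟨?_, lam, hl, ?_⟩
    · rw [Nat.card_eq_two_iff' (0 : F)]
      exact ⟨1, one_ne_zero, fun t ht => (h2 t).resolve_left ht⟩
    obtain ⟨i, j, hpos, hlt, hi, hj⟩ := D.exists_bad_pair hirr hY hn
    refine ⟨k i, k j, hpos, hlt, ?_, ?_⟩
    · rw [hN lam hl]
      obtain ⟨b, hb⟩ : ∃ b, k j = b + 1 := ⟨k j - 1, by omega⟩
      have := D.count hirr H hb hj
      rw [hb]
      exact this
    · rw [hN lam hl]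
      obtain ⟨b, hb⟩ : ∃ b, k i = b + 1 := ⟨k i - 1, by omega⟩
      have := D.count hirr H hb hi
      rw [hb]
      exact this
  · rintro ⟨hcard, lam, hl, r', s, hr', hs, h1, h3⟩
    rw [hN lam hl] at h1 h3
    have h2 : ∀ t : F, t = 0 ∨ t = 1 := by
      obtain ⟨u, hu, hu'⟩ := (Nat.card_eq_two_iff' (0 : F)).1 hcard
      intro t
      by_cases ht : t = 0
      · exact Or.inl ht
      · right; rw [hu' t ht, hu' 1 one_ne_zero]
    obtain ⟨b, rfl⟩ : ∃ b, r' = b + 1 := ⟨r' - 1, by omega⟩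
    obtain ⟨b', rfl⟩ : ∃ b', s = b' + 1 := ⟨s - 1, by omega⟩
    have f1 := finrank_jordW (Polynomial.aeval A p) b
    have f2 := finrank_jordW (Polynomial.aeval A p) b'
    rw [Nat.add_sub_cancel] at h1 h3
    change _ = _ + Module.finrank F (LinearMap.ker (Polynomial.aeval A p ^ (b' + 2))) + 1 at h1
    change _ = _ + Module.finrank F (LinearMap.ker (Polynomial.aeval A p ^ (b + 2))) + 1 at h3
    refine D.converse hirr h2 lam ?_ (b := b) (b' := b') (by omega) (by omega) (by omega)
    rw [← hN lam hl, sub_add_cancel]
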